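/- Let f ∈ C_0(R^N) (continuous, vanishing at infinity) and let ρ ∈ L¹(R) with ∫_R ρ(z) dz = 1. For w ∈ R^N define h_w ∈ L¹(R^N) by h_w(y) := ∏_{j=1}^N w(j)·ρ(w(j)·y(j)). Then f(x) = lim_{Ω→∞} Ω^{−N} ∫_{[0,Ω]^N} (f * h_w)(x) dw uniformly for all x ∈ R^N; that is, for every ε > 0 there exists Ω₀ > 0 such that for every Ω ≥ Ω₀, sup_{x∈R^N} | f(x) − Ω^{−N} ∫_{[0,Ω]^N} (f * h_w)(x) dw | < ε. -/

import Mathlib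

open MeasureTheory Filter

noncomputable section

/-- The product kernel `h_w(y) := ∏_{j=1}^N w(j)·ρ(w(j)·y(j))`. -/
def hker {N : ℕ} (ρ : ℝ → ℝ) (w y : EuclideanSpace ℝ (Fin N)) : ℝ :=
  ∏ j, w j * ρ (w j * y j)

/-- Convolution `(f * g)(x) := ∫ f(y)·g(x − y) dy`. -/
def convWith {N : ℕ} (f g : EuclideanSpace ℝ (Fin N) → ℝ)
    (x : EuclideanSpace ℝ (Fin N)) : ℝ :=
  ∫ y, f y * g (x - y)

/-- Rescaled form of the convolution, on `Fin N → ℝ`. -/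
lemma conv_rescaled {N : ℕ} (f : EuclideanSpace ℝ (Fin N) → ℝ) (ρ : ℝ → ℝ)
    (v x : Fin N → ℝ) (hv : ∀ j, 0 < v j) :
    convWith f (hker ρ (WithLp.toLp 2 v)) (WithLp.toLp 2 x) =
      ∫ z : Fin N → ℝ, f (WithLp.toLp 2 (x - v⁻¹ * z)) * ∏ j, ρ (z j) := by
  have h1 : convWith f (hker ρ (WithLp.toLp 2 v)) (WithLp.toLp 2 x) =
      ∫ y, f (WithLp.toLp 2 x - y) * hker ρ (WithLp.toLp 2 v) y := by
    unfold convWith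
    rw [← integral_sub_left_eq_self (fun y => f (WithLp.toLp 2 x - y) *
      hker ρ (WithLp.toLp 2 v) y) volume (WithLp.toLp 2 x)]
    simp
  rw [h1, ← (PiLp.volume_preserving_toLp (Fin N)).integral_comp
    (MeasurableEquiv.toLp 2 (Fin N → ℝ)).measurableEmbedding]
  have hdet : Matrix.det (Matrix.diagonal v) ≠ 0 := by
    rw [Matrix.det_diagonal]
    exact Finset.prod_ne_zero_iff.mpr fun j _ => (hv j).ne'
  have hpos : 0 < ∏ j, v j := Finset.prod_pos fun j _ => hv j
  have hlin : ∀ z, Matrix.toLin' (Matrix.diagonal v) z = v * z := by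
    intro z
    ext j
    simp [Matrix.toLin'_apply, Matrix.mulVec_diagonal]
  have hemb : MeasurableEmbedding (Matrix.toLin' (Matrix.diagonal v)) := by
    apply Continuous.measurableEmbedding
    · exact LinearMap.continuous_of_finiteDimensional _
    · intro a b hab
      rw [hlin, hlin] at hab
      ext j
      have := congrFun hab j
      simpa [(hv j).ne'] using this
  conv_rhs => rw [← Real.smul_map_diagonal_volume_pi hdet]
  rw [integral_smul_measure, hemb.integral_map, Matrix.det_diagonal, abs_of_pos hpos,
    ENNReal.toReal_ofReal hpos.le, smul_eq_mul, ← integral_const_mul]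
  congr 1
  ext z
  have hz : v⁻¹ * (v * z) = z := by
    ext j
    simp [(hv j).ne']
  rw [hlin, hz]
  simp only [hker, Finset.prod_mul_distrib, WithLp.toLp_sub, Pi.mul_apply]
  ring

/-- Uniform estimate of the mean over the box. -/
lemma box_average {N : ℕ} (F P : (Fin N → ℝ) → ℝ) (hF : UniformContinuous F) (M : ℝ)
    (hM : ∀ v, |F v| ≤ M) (hP : Integrable P) (hP1 : ∫ z, P z = 1) (ε : ℝ) (hε : 0 < ε) :
    ∃ Ω₀ > 0, ∀ Ω ≥ Ω₀, ∀ x : Fin N → ℝ,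
      |F x - (Ω ^ N)⁻¹ * ∫ v in Set.Icc (0 : Fin N → ℝ) (fun _ => Ω),
        ∫ z, F (x - v⁻¹ * z) * P z| < ε := by
  have hM0 : 0 ≤ M := (abs_nonneg _).trans (hM 0)
  set K : ℝ := ∫ z, |P z| with hK
  have hK0 : 0 ≤ K := integral_nonneg fun z => abs_nonneg _
  have hFm : Measurable F := hF.continuous.measurable
  have hFPint : ∀ x v : Fin N → ℝ, Integrable (fun z => F (x - v⁻¹ * z) * P z) := by
    intro x v
    refine hP.bdd_mul (c := M) ?_ (Eventually.of_forall fun z => hM _)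
    have : Continuous fun z : Fin N → ℝ => F (x - v⁻¹ * z) :=
      hF.continuous.comp (by fun_prop)
    exact this.aestronglyMeasurable
  have hdiff : ∀ x v : Fin N → ℝ, F x - ∫ z, F (x - v⁻¹ * z) * P z =
      ∫ z, (F x - F (x - v⁻¹ * z)) * P z := by
    intro x v
    simp_rw [sub_mul]
    rw [integral_sub (hP.const_mul _) (hFPint x v), integral_const_mul, hP1, mul_one]
  have hdi : ∀ x v : Fin N → ℝ, Integrable (fun z => (F x - F (x - v⁻¹ * z)) * P z) := by
    intro x v
    simp_rw [sub_mul]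
    exact (hP.const_mul _).sub (hFPint x v)
  have hFF : ∀ a b, |F a - F b| ≤ 2 * M := by
    intro a b
    have h1 := abs_le.1 (hM a)
    have h2 := abs_le.1 (hM b)
    exact abs_le.2 ⟨by linarith, by linarith⟩
  have hbd : ∀ x v : Fin N → ℝ, |F x - ∫ z, F (x - v⁻¹ * z) * P z| ≤ 2 * M * K := by
    intro x v
    rw [hdiff]
    refine (abs_integral_le_integral_abs).trans ?_
    rw [hK, ← integral_const_mul]
    refine integral_mono (hdi x v).abs (hP.abs.const_mul _) fun z => ?_
    simp only [abs_mul]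
    exact mul_le_mul_of_nonneg_right (hFF _ _) (abs_nonneg _)
  -- tail of `P`
  have htail : Tendsto (fun n : ℕ => ∫ z in {z : Fin N → ℝ | (n : ℝ) ≤ ‖z‖}, |P z|) atTop
      (nhds 0) := by
    have h := tendsto_setIntegral_of_antitone (μ := volume) (f := fun z => |P z|)
      (s := fun n : ℕ => {z : Fin N → ℝ | (n : ℝ) ≤ ‖z‖})
      (fun n => measurableSet_le measurable_const measurable_norm)
      (by
        intro m n hmn z hz
        simp only [Set.mem_ofPred_eq] at hz ⊢
        exact le_trans (Nat.cast_le.2 hmn) hz)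
      ⟨0, hP.abs.integrableOn⟩
    have he : (⋂ n : ℕ, {z : Fin N → ℝ | (n : ℝ) ≤ ‖z‖}) = ∅ := by
      ext z
      simp only [Set.mem_iInter, Set.mem_ofPred_eq, Set.mem_empty_iff_false, iff_false, not_forall,
        not_le]
      exact exists_nat_gt ‖z‖
    simpa [he] using h
  obtain ⟨n, hn⟩ : ∃ n : ℕ, 2 * M * ∫ z in {z : Fin N → ℝ | (n : ℝ) ≤ ‖z‖}, |P z| < ε / 4 := by
    have h := htail.const_mul (2 * M)
    rw [mul_zero] at h
    exact (h.eventually_lt_const (by positivity : (0 : ℝ) < ε / 4)).exists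
  obtain ⟨δ, hδ, hFδ⟩ := Metric.uniformContinuous_iff.1 hF (ε / (4 * (K + 1))) (by positivity)
  set A : ℝ := (n + 1) / δ with hA
  have hA0 : 0 < A := by positivity
  have hgood : ∀ x v : Fin N → ℝ, (∀ j, A ≤ v j) →
      |F x - ∫ z, F (x - v⁻¹ * z) * P z| ≤ ε / 2 := by
    intro x v hv
    rw [hdiff]
    refine (abs_integral_le_integral_abs).trans ?_
    set S := {z : Fin N → ℝ | (n : ℝ) ≤ ‖z‖} with hS
    have hSm : MeasurableSet S := measurableSet_le measurable_const measurable_norm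
    have hle : ∀ z, |(F x - F (x - v⁻¹ * z)) * P z| ≤
        ε / (4 * (K + 1)) * |P z| + S.indicator (fun z => 2 * M * |P z|) z := by
      intro z
      rw [abs_mul]
      by_cases hz : z ∈ S
      · rw [Set.indicator_of_mem hz]
        have h1 := mul_le_mul_of_nonneg_right (hFF x (x - v⁻¹ * z)) (abs_nonneg (P z))
        have h2 : 0 ≤ ε / (4 * (K + 1)) * |P z| := by positivity
        linarith
      · rw [Set.indicator_of_notMem hz, add_zero]
        refine mul_le_mul_of_nonneg_right (le_of_lt ?_) (abs_nonneg _)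
        rw [← Real.dist_eq]
        apply hFδ
        have hz' : ‖z‖ < n := not_le.1 hz
        rw [dist_eq_norm, sub_sub_cancel]
        refine lt_of_le_of_lt ((pi_norm_le_iff_of_nonneg
          (by positivity : 0 ≤ A⁻¹ * ‖z‖)).2 fun j => ?_) ?_
        · rw [Pi.mul_apply, Pi.inv_apply, norm_mul, norm_inv, Real.norm_of_nonneg
            (hA0.le.trans (hv j))]
          exact mul_le_mul (inv_anti₀ hA0 (hv j)) (norm_le_pi_norm z j) (norm_nonneg _)
            (by positivity)
        · rw [hA, inv_div, div_mul_eq_mul_div, div_lt_iff₀ (by positivity)]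
          exact mul_lt_mul_of_pos_left (by linarith) hδ
    have hi1 : Integrable fun z => ε / (4 * (K + 1)) * |P z| := hP.abs.const_mul _
    have hi2 : Integrable (S.indicator fun z => 2 * M * |P z|) :=
      (hP.abs.const_mul _).indicator hSm
    refine (integral_mono (hdi x v).abs (hi1.add hi2) hle).trans ?_
    simp only [Pi.add_apply]
    rw [integral_add hi1 hi2, integral_indicator hSm, integral_const_mul, integral_const_mul, ← hK]
    have : ε / (4 * (K + 1)) * K ≤ ε / 4 := by
      rw [div_mul_eq_mul_div, div_le_div_iff₀ (by positivity) (by positivity)]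
      nlinarith
    linarith
  -- measurability in `v`
  have hmeas : ∀ x : Fin N → ℝ, AEStronglyMeasurable
      (fun v : Fin N → ℝ => ∫ z, F (x - v⁻¹ * z) * P z) volume := by
    intro x
    have h : AEStronglyMeasurable (fun p : (Fin N → ℝ) × (Fin N → ℝ) =>
        F (x - p.1⁻¹ * p.2) * P p.2) (volume.prod volume) := by
      apply AEStronglyMeasurable.mul
      · refine (hFm.comp ?_).aestronglyMeasurable
        refine measurable_pi_lambda _ fun j => ?_
        simp only [Pi.sub_apply, Pi.mul_apply, Pi.inv_apply]
        fun_prop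
      · exact hP.aestronglyMeasurable.comp_snd
    exact h.integral_prod_right'
  have hlim : Tendsto (fun Ω : ℝ => 2 * M * K * (1 - (1 - A / Ω) ^ N)) atTop (nhds 0) := by
    have h1 : Tendsto (fun Ω : ℝ => A / Ω) atTop (nhds 0) := tendsto_const_nhds.div_atTop tendsto_id
    have h2 := (((h1.const_sub 1).pow N).const_sub 1).const_mul (2 * M * K)
    simpa using h2
  obtain ⟨Ω₁, hΩ₁⟩ := eventually_atTop.1 (hlim.eventually_lt_const (by positivity : (0 : ℝ) < ε / 2))
  refine ⟨max A Ω₁, lt_max_of_lt_left hA0, fun Ω hΩ x => ?_⟩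
  have hAΩ : A ≤ Ω := (le_max_left _ _).trans hΩ
  have hΩ0 : 0 < Ω := hA0.trans_le hAΩ
  have hsmall := hΩ₁ Ω ((le_max_right _ _).trans hΩ)
  set B : Set (Fin N → ℝ) := Set.Icc 0 (fun _ => Ω) with hB
  set G : Set (Fin N → ℝ) := Set.Icc (fun _ => A) (fun _ => Ω) with hG
  have hGB : G ⊆ B := Set.Icc_subset_Icc_left fun _ => hA0.le
  have hBv : volume.real B = Ω ^ N := by
    rw [Measure.real, hB, Real.volume_Icc_pi_toReal (a := 0) (b := fun _ => Ω) (fun _ => hΩ0.le)]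
    simp
  have hGv : volume.real G = (Ω - A) ^ N := by
    rw [Measure.real, hG, Real.volume_Icc_pi_toReal (fun _ => hAΩ)]
    simp
  have hBfin : volume B ≠ ⊤ := isCompact_Icc.measure_ne_top
  have hBGfin : volume (B \ G) ≠ ⊤ := measure_ne_top_of_subset Set.sdiff_subset hBfin
  have hBGv : volume.real (B \ G) = Ω ^ N - (Ω - A) ^ N := by
    rw [measureReal_sdiff hGB measurableSet_Icc, hBv, hGv]
  set H : (Fin N → ℝ) → ℝ := fun v => ∫ z, F (x - v⁻¹ * z) * P z with hH
  have hDint : IntegrableOn (fun v => F x - H v) B := by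
    refine Measure.integrableOn_of_bounded (M := 2 * M * K) hBfin
      (aestronglyMeasurable_const.sub (hmeas x)) (Eventually.of_forall fun v => hbd x v)
  have hcint : IntegrableOn (fun _ : Fin N → ℝ => F x) B := integrableOn_const hBfin
  have hHint : IntegrableOn H B := by
    have := hcint.sub hDint
    simpa [Pi.sub_def] using this
  have key : F x - (Ω ^ N)⁻¹ * ∫ v in B, H v = (Ω ^ N)⁻¹ * ∫ v in B, (F x - H v) := by
    rw [integral_sub hcint hHint, setIntegral_const, hBv, smul_eq_mul]
    field_simp
  rw [key, abs_mul, abs_of_pos (by positivity : 0 < (Ω ^ N)⁻¹)]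
  have hBG : MeasurableSet (B \ G) := measurableSet_Icc.diff measurableSet_Icc
  have hest : |∫ v in B, (F x - H v)| ≤ ε / 2 * Ω ^ N + 2 * M * K * (Ω ^ N - (Ω - A) ^ N) := by
    rw [← Set.sdiff_union_of_subset hGB, setIntegral_union Set.disjoint_sdiff_left measurableSet_Icc
      (hDint.mono_set Set.sdiff_subset) (hDint.mono_set hGB)]
    refine (abs_add_le _ _).trans ?_
    have e1 : |∫ v in B \ G, (F x - H v)| ≤ 2 * M * K * volume.real (B \ G) := by
      rw [← Real.norm_eq_abs]
      exact norm_setIntegral_le_of_norm_le_const hBGfin.lt_top fun v _ => hbd x v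
    have e2 : |∫ v in G, (F x - H v)| ≤ ε / 2 * volume.real G := by
      rw [← Real.norm_eq_abs]
      exact norm_setIntegral_le_of_norm_le_const isCompact_Icc.measure_lt_top
        fun v hv => hgood x v hv.1
    rw [hBGv] at e1
    have e3 : volume.real G ≤ Ω ^ N := hBv ▸ measureReal_mono hGB hBfin
    have e4 := mul_le_mul_of_nonneg_left e3 (half_pos hε).le
    linarith
  have hfin : (Ω ^ N)⁻¹ * (ε / 2 * Ω ^ N + 2 * M * K * (Ω ^ N - (Ω - A) ^ N)) =
      ε / 2 + 2 * M * K * (1 - (1 - A / Ω) ^ N) := by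
    have : 1 - A / Ω = (Ω - A) / Ω := by field_simp
    rw [this, div_pow]
    field_simp
  calc _ ≤ _ := mul_le_mul_of_nonneg_left hest (by positivity)
    _ = _ := hfin
    _ < ε := by linarith

/-- **Limit-integral representation of `f ∈ C₀(ℝ^N)` (Lemma "Step 1").**
Let `ρ ∈ L¹(ℝ)` with `∫ ρ = 1` and `h_w(y) := ∏_j w(j)·ρ(w(j)·y(j))`.  Then for every
continuous `f : ℝ^N → ℝ` vanishing at infinity,
`f(x) = lim_{Ω→∞} Ω^{−N} ∫_{[0,Ω]^N} (f * h_w)(x) dw` uniformly in `x`: for every `ε > 0`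
there is `Ω₀ > 0` such that for all `Ω ≥ Ω₀` and all `x ∈ ℝ^N`,
`|f(x) − Ω^{−N} ∫_{[0,Ω]^N} (f * h_w)(x) dw| < ε`. -/
theorem limit_integral_representation_C0
    {N : ℕ} (f : EuclideanSpace ℝ (Fin N) → ℝ) (hfc : Continuous f)
    (hf0 : Tendsto f (cocompact (EuclideanSpace ℝ (Fin N))) (nhds 0))
    (ρ : ℝ → ℝ) (hρ1 : Integrable ρ) (hρint : ∫ z, ρ z = 1) :
    ∀ ε > 0, ∃ Ω₀ > 0, ∀ Ω ≥ Ω₀, ∀ x : EuclideanSpace ℝ (Fin N),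
      |f x - (Ω ^ N)⁻¹ *
        ∫ w in {w : EuclideanSpace ℝ (Fin N) | ∀ j, w j ∈ Set.Icc (0 : ℝ) Ω},
          convWith f (hker ρ w) x| < ε := by
  intro ε hε
  let F : (Fin N → ℝ) → ℝ := fun v => f (WithLp.toLp 2 v)
  have hFu : UniformContinuous F :=
    (hfc.uniformContinuous_of_tendsto_cocompact hf0).comp (PiLp.uniformContinuous_toLp 2 _)
  let g : ZeroAtInftyContinuousMap (EuclideanSpace ℝ (Fin N)) ℝ := ⟨⟨f, hfc⟩, hf0⟩
  have hM : ∀ v, |F v| ≤ ‖g.toBCF‖ := fun v => g.toBCF.norm_coe_le_norm (WithLp.toLp 2 v)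
  have hP : Integrable (fun z : Fin N → ℝ => ∏ j, ρ (z j)) :=
    Integrable.fintype_prod (f := fun _ => ρ) fun _ => hρ1
  have hP1 : ∫ z : Fin N → ℝ, ∏ j, ρ (z j) = 1 := by
    rw [integral_fintype_prod_volume_eq_prod (fun _ => ρ)]
    simp [hρint]
  obtain ⟨Ω₀, h0, h⟩ := box_average F _ hFu _ hM hP hP1 ε hε
  refine ⟨Ω₀, h0, fun Ω hΩ x => ?_⟩
  have hx := h Ω hΩ (WithLp.ofLp x)
  have hset : ∫ w in {w : EuclideanSpace ℝ (Fin N) | ∀ j, w j ∈ Set.Icc (0 : ℝ) Ω},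
      convWith f (hker ρ w) x = ∫ v in Set.Icc (0 : Fin N → ℝ) (fun _ => Ω),
        ∫ z, F (WithLp.ofLp x - v⁻¹ * z) * ∏ j, ρ (z j) := by
    rw [← (PiLp.volume_preserving_toLp (Fin N)).setIntegral_preimage_emb
      (MeasurableEquiv.toLp 2 (Fin N → ℝ)).measurableEmbedding]
    have hs : (WithLp.toLp 2 ⁻¹' {w : EuclideanSpace ℝ (Fin N) | ∀ j, w j ∈ Set.Icc (0 : ℝ) Ω}) =
        Set.Icc (0 : Fin N → ℝ) (fun _ => Ω) := by
      ext v
      simp [Set.mem_Icc, Pi.le_def, forall_and]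
    have hae : (Set.pi Set.univ fun _ : Fin N => Set.Ioc (0 : ℝ) Ω) =ᵐ[volume]
        Set.Icc (0 : Fin N → ℝ) (fun _ => Ω) := Measure.univ_pi_Ioc_ae_eq_Icc
    rw [hs, ← setIntegral_congr_set hae, ← setIntegral_congr_set hae]
    refine setIntegral_congr_fun (MeasurableSet.univ_pi fun _ => measurableSet_Ioc) fun v hv => ?_
    exact conv_rescaled f ρ v (WithLp.ofLp x) fun j => (hv j (Set.mem_univ j)).1
  rw [hset]
  exact hx
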